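/- For any EUF formula F that is in negation-normal form, there is a parsing of F as a PEUF p-formula in which every function symbol of F_g is classified as a g-function symbol and every function symbol of F_p is classified as a p-function symbol. -/

import Mathlib

mutual
inductive EufTerm (Fn Pr : Type) : Type
  | app : Fn → List (EufTerm Fn Pr) → EufTerm Fn Pr
  | ite : EufFormula Fn Pr → EufTerm Fn Pr → EufTerm Fn Pr → EufTerm Fn Pr
inductive EufFormula (Fn Pr : Type) : Type
  | tt : EufFormula Fn Pr
  | ff : EufFormula Fn Pr
  | not : EufFormula Fn Pr → EufFormula Fn Pr
  | and : EufFormula Fn Pr → EufFormula Fn Pr → EufFormula Fn Pr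
  | or : EufFormula Fn Pr → EufFormula Fn Pr → EufFormula Fn Pr
  | eq : EufTerm Fn Pr → EufTerm Fn Pr → EufFormula Fn Pr
  | papp : Pr → List (EufTerm Fn Pr) → EufFormula Fn Pr
end

structure Interp (Fn Pr : Type) (D : Type u) where
  fn : Fn → List D → D
  pr : Pr → List D → Bool

open Classical in
mutual
noncomputable def evalT {Fn Pr : Type} {D : Type} (I : Interp Fn Pr D) : EufTerm Fn Pr → D
  | .app f args => I.fn f (args.attach.map (fun t => evalT I t.1))
  | .ite G T1 T2 => if evalF I G then evalT I T1 else evalT I T2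
termination_by t => sizeOf t
decreasing_by
  all_goals simp_wf
  all_goals try omega
  all_goals (have := List.sizeOf_lt_of_mem t.2; omega)
noncomputable def evalF {Fn Pr : Type} {D : Type} (I : Interp Fn Pr D) : EufFormula Fn Pr → Bool
  | .tt => true
  | .ff => false
  | .not G => !evalF I G
  | .and G1 G2 => evalF I G1 && evalF I G2
  | .or G1 G2 => evalF I G1 || evalF I G2
  | .eq T1 T2 => decide (evalT I T1 = evalT I T2)
  | .papp p args => I.pr p (args.attach.map (fun t => evalT I t.1))
termination_by g => sizeOf g
decreasing_by
  all_goals simp_wf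
  all_goals try omega
  all_goals (have := List.sizeOf_lt_of_mem t.2; omega)
end
def ValidOn {Fn Pr : Type} (F : EufFormula Fn Pr) (D : Type) : Prop :=
  ∀ I : Interp Fn Pr D, evalF I F = true

def UniversallyValid {Fn Pr : Type} (F : EufFormula Fn Pr) : Prop :=
  ∀ D : Type, Nonempty D → ValidOn F D

/-- Expressions: terms or formulas. -/
inductive EufExpr (Fn Pr : Type) : Type
  | t : EufTerm Fn Pr → EufExpr Fn Pr
  | f : EufFormula Fn Pr → EufExpr Fn Pr

/-- Immediate (proper) subexpression relation. -/
inductive ImmSub {Fn Pr : Type} : EufExpr Fn Pr → EufExpr Fn Pr → Prop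
  | appArg {g : Fn} {args : List (EufTerm Fn Pr)} {T : EufTerm Fn Pr} :
      T ∈ args → ImmSub (.t T) (.t (.app g args))
  | iteC {G : EufFormula Fn Pr} {T1 T2 : EufTerm Fn Pr} : ImmSub (.f G) (.t (.ite G T1 T2))
  | ite1 {G : EufFormula Fn Pr} {T1 T2 : EufTerm Fn Pr} : ImmSub (.t T1) (.t (.ite G T1 T2))
  | ite2 {G : EufFormula Fn Pr} {T1 T2 : EufTerm Fn Pr} : ImmSub (.t T2) (.t (.ite G T1 T2))
  | not {G : EufFormula Fn Pr} : ImmSub (.f G) (.f (.not G))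
  | andL {G1 G2 : EufFormula Fn Pr} : ImmSub (.f G1) (.f (.and G1 G2))
  | andR {G1 G2 : EufFormula Fn Pr} : ImmSub (.f G2) (.f (.and G1 G2))
  | orL {G1 G2 : EufFormula Fn Pr} : ImmSub (.f G1) (.f (.or G1 G2))
  | orR {G1 G2 : EufFormula Fn Pr} : ImmSub (.f G2) (.f (.or G1 G2))
  | eqL {T1 T2 : EufTerm Fn Pr} : ImmSub (.t T1) (.f (.eq T1 T2))
  | eqR {T1 T2 : EufTerm Fn Pr} : ImmSub (.t T2) (.f (.eq T1 T2))
  | pappArg {p : Pr} {args : List (EufTerm Fn Pr)} {T : EufTerm Fn Pr} :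
      T ∈ args → ImmSub (.t T) (.f (.papp p args))

/-- `SubExpr a b`: `a` occurs (as a subexpression) in `b`. -/
def SubExpr {Fn Pr : Type} (a b : EufExpr Fn Pr) : Prop := Relation.ReflTransGen ImmSub a b

def TermInT {Fn Pr : Type} (T S : EufTerm Fn Pr) : Prop := SubExpr (.t T) (.t S)
def TermInF {Fn Pr : Type} (T : EufTerm Fn Pr) (F : EufFormula Fn Pr) : Prop :=
  SubExpr (.t T) (.f F)
def FormulaInT {Fn Pr : Type} (G : EufFormula Fn Pr) (S : EufTerm Fn Pr) : Prop :=
  SubExpr (.f G) (.t S)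
def FormulaInF {Fn Pr : Type} (G F : EufFormula Fn Pr) : Prop := SubExpr (.f G) (.f F)

def IsAppTerm {Fn Pr : Type} : EufTerm Fn Pr → Prop
  | .app _ _ => True
  | _ => False

/-- `𝒯(F)`: the function application terms occurring in `F`. -/
def AppTermsF {Fn Pr : Type} (F : EufFormula Fn Pr) : Set (EufTerm Fn Pr) :=
  {T | IsAppTerm T ∧ TermInF T F}

/-- A function symbol occurs in `F` when some application of it occurs in `F`. -/
def FnInF {Fn Pr : Type} (g : Fn) (F : EufFormula Fn Pr) : Prop :=
  ∃ args, TermInF (EufTerm.app g args) F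

def PrInF {Fn Pr : Type} (p : Pr) (F : EufFormula Fn Pr) : Prop :=
  ∃ args, FormulaInF (EufFormula.papp p args) F

/-- `I` is diverse for `F` with respect to the set `Sg` of function symbols. -/
def DiverseFor {Fn Pr D : Type} (I : Interp Fn Pr D) (F : EufFormula Fn Pr)
    (Sg : Set Fn) : Prop :=
  ∀ (g : Fn) (args : List (EufTerm Fn Pr)), g ∈ Sg →
    TermInF (EufTerm.app g args) F →
    ∀ T2 ∈ AppTermsF F, evalT I (EufTerm.app g args) = evalT I T2 →
      ∃ args2, T2 = EufTerm.app g args2 ∧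
        List.Forall₂ (fun a b => evalT I a = evalT I b) args args2

mutual
/-- PEUF g-terms, where `isP` designates the p-function symbols. -/
inductive IsGTerm {Fn Pr : Type} (isP : Fn → Prop) : EufTerm Fn Pr → Prop
  | ite {G : EufFormula Fn Pr} {T1 T2 : EufTerm Fn Pr} :
      IsGFormula isP G → IsGTerm isP T1 → IsGTerm isP T2 → IsGTerm isP (.ite G T1 T2)
  | app {g : Fn} {args : List (EufTerm Fn Pr)} :
      ¬ isP g → (∀ T ∈ args, IsPTerm isP T) → IsGTerm isP (.app g args)
/-- PEUF p-terms. -/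
inductive IsPTerm {Fn Pr : Type} (isP : Fn → Prop) : EufTerm Fn Pr → Prop
  | g {T : EufTerm Fn Pr} : IsGTerm isP T → IsPTerm isP T
  | ite {G : EufFormula Fn Pr} {T1 T2 : EufTerm Fn Pr} :
      IsGFormula isP G → IsPTerm isP T1 → IsPTerm isP T2 → IsPTerm isP (.ite G T1 T2)
  | app {g : Fn} {args : List (EufTerm Fn Pr)} :
      isP g → (∀ T ∈ args, IsPTerm isP T) → IsPTerm isP (.app g args)
/-- PEUF g-formulas. -/
inductive IsGFormula {Fn Pr : Type} (isP : Fn → Prop) : EufFormula Fn Pr → Prop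
  | tt : IsGFormula isP .tt
  | ff : IsGFormula isP .ff
  | not {G : EufFormula Fn Pr} : IsGFormula isP G → IsGFormula isP (.not G)
  | and {G1 G2 : EufFormula Fn Pr} :
      IsGFormula isP G1 → IsGFormula isP G2 → IsGFormula isP (.and G1 G2)
  | or {G1 G2 : EufFormula Fn Pr} :
      IsGFormula isP G1 → IsGFormula isP G2 → IsGFormula isP (.or G1 G2)
  | eq {T1 T2 : EufTerm Fn Pr} :
      IsGTerm isP T1 → IsGTerm isP T2 → IsGFormula isP (.eq T1 T2)
  | papp {p : Pr} {args : List (EufTerm Fn Pr)} :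
      (∀ T ∈ args, IsPTerm isP T) → IsGFormula isP (.papp p args)
/-- PEUF p-formulas. -/
inductive IsPFormula {Fn Pr : Type} (isP : Fn → Prop) : EufFormula Fn Pr → Prop
  | g {G : EufFormula Fn Pr} : IsGFormula isP G → IsPFormula isP G
  | and {G1 G2 : EufFormula Fn Pr} :
      IsPFormula isP G1 → IsPFormula isP G2 → IsPFormula isP (.and G1 G2)
  | or {G1 G2 : EufFormula Fn Pr} :
      IsPFormula isP G1 → IsPFormula isP G2 → IsPFormula isP (.or G1 G2)
  | eq {T1 T2 : EufTerm Fn Pr} :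
      IsPTerm isP T1 → IsPTerm isP T2 → IsPFormula isP (.eq T1 T2)
end

/-- The p-function symbols occurring in `F`. -/
def PSymbolsIn {Fn Pr : Type} (isP : Fn → Prop) (F : EufFormula Fn Pr) : Set Fn :=
  {g | isP g ∧ FnInF g F}

/-- `I` is maximally diverse for the p-formula `F`. -/
def MaxDiverse {Fn Pr D : Type} (isP : Fn → Prop) (I : Interp Fn Pr D)
    (F : EufFormula Fn Pr) : Prop :=
  DiverseFor I F (PSymbolsIn isP F)

/-- `I'` refines `I` on the term set `Ts`. -/
def RefinesOn {Fn Pr D D' : Type} (I' : Interp Fn Pr D') (I : Interp Fn Pr D)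
    (Ts : Set (EufTerm Fn Pr)) : Prop :=
  ∀ T1 ∈ Ts, ∀ T2 ∈ Ts, evalT I' T1 = evalT I' T2 → evalT I T1 = evalT I T2

def ProperRefinesOn {Fn Pr D D' : Type} (I' : Interp Fn Pr D') (I : Interp Fn Pr D)
    (Ts : Set (EufTerm Fn Pr)) : Prop :=
  RefinesOn I' I Ts ∧
    ∃ T1 ∈ Ts, ∃ T2 ∈ Ts, evalT I T1 = evalT I T2 ∧ evalT I' T1 ≠ evalT I' T2
mutual
/-- Negation-normal form (terms): negation applied only to equations and predicate
applications, everywhere in the expression. -/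
inductive NNFT {Fn Pr : Type} : EufTerm Fn Pr → Prop
  | app {g : Fn} {args : List (EufTerm Fn Pr)} :
      (∀ T ∈ args, NNFT T) → NNFT (.app g args)
  | ite {G : EufFormula Fn Pr} {T1 T2 : EufTerm Fn Pr} :
      NNFF G → NNFT T1 → NNFT T2 → NNFT (.ite G T1 T2)
/-- Negation-normal form (formulas). -/
inductive NNFF {Fn Pr : Type} : EufFormula Fn Pr → Prop
  | tt : NNFF .tt
  | ff : NNFF .ff
  | and {G1 G2 : EufFormula Fn Pr} : NNFF G1 → NNFF G2 → NNFF (.and G1 G2)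
  | or {G1 G2 : EufFormula Fn Pr} : NNFF G1 → NNFF G2 → NNFF (.or G1 G2)
  | eq {T1 T2 : EufTerm Fn Pr} : NNFT T1 → NNFT T2 → NNFF (.eq T1 T2)
  | papp {p : Pr} {args : List (EufTerm Fn Pr)} :
      (∀ T ∈ args, NNFT T) → NNFF (.papp p args)
  | notEq {T1 T2 : EufTerm Fn Pr} : NNFT T1 → NNFT T2 → NNFF (.not (.eq T1 T2))
  | notPapp {p : Pr} {args : List (EufTerm Fn Pr)} :
      (∀ T ∈ args, NNFT T) → NNFF (.not (.papp p args))
end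

/-- `Φ⁻`: the negative formulas of `F0`. -/
inductive NegFormula {Fn Pr : Type} (F0 : EufFormula Fn Pr) : EufFormula Fn Pr → Prop
  | ofNot {G : EufFormula Fn Pr} : FormulaInF (.not G) F0 → NegFormula F0 G
  | ofIte {G : EufFormula Fn Pr} {T1 T2 : EufTerm Fn Pr} :
      TermInF (.ite G T1 T2) F0 → NegFormula F0 G
  | andL {G1 G2 : EufFormula Fn Pr} : NegFormula F0 (.and G1 G2) → NegFormula F0 G1
  | andR {G1 G2 : EufFormula Fn Pr} : NegFormula F0 (.and G1 G2) → NegFormula F0 G2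
  | orL {G1 G2 : EufFormula Fn Pr} : NegFormula F0 (.or G1 G2) → NegFormula F0 G1
  | orR {G1 G2 : EufFormula Fn Pr} : NegFormula F0 (.or G1 G2) → NegFormula F0 G2

/-- `Θ⁻`: the negative terms of `F0`. -/
inductive NegTerm {Fn Pr : Type} (F0 : EufFormula Fn Pr) : EufTerm Fn Pr → Prop
  | eqL {T1 T2 : EufTerm Fn Pr} : NegFormula F0 (.eq T1 T2) → NegTerm F0 T1
  | eqR {T1 T2 : EufTerm Fn Pr} : NegFormula F0 (.eq T1 T2) → NegTerm F0 T2
  | ite1 {G : EufFormula Fn Pr} {T1 T2 : EufTerm Fn Pr} :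
      NegTerm F0 (.ite G T1 T2) → NegTerm F0 T1
  | ite2 {G : EufFormula Fn Pr} {T1 T2 : EufTerm Fn Pr} :
      NegTerm F0 (.ite G T1 T2) → NegTerm F0 T2

mutual
theorem parseT {Fn Pr : Type} (F : EufFormula Fn Pr) : (T : EufTerm Fn Pr) → TermInF T F →
    IsPTerm (fun g => ¬ ∃ args, NegTerm F (EufTerm.app g args)) T ∧
    (NegTerm F T → IsGTerm (fun g => ¬ ∃ args, NegTerm F (EufTerm.app g args)) T)
  | .app g args, h => by
      have ha : ∀ T ∈ args, IsPTerm (fun g => ¬ ∃ args, NegTerm F (EufTerm.app g args)) T :=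
        fun T hT => (parseT F T (Relation.ReflTransGen.head (ImmSub.appArg hT) h)).1
      refine ⟨?_, fun hn => IsGTerm.app (not_not_intro ⟨args, hn⟩) ha⟩
      by_cases hg : ∃ args, NegTerm F (EufTerm.app g args)
      · exact IsPTerm.g (IsGTerm.app (not_not_intro hg) ha)
      · exact IsPTerm.app hg ha
  | .ite G T1 T2, h => by
      have hG := (parseF F G (Relation.ReflTransGen.head ImmSub.iteC h)).2 (NegFormula.ofIte h)
      have h1 := parseT F T1 (Relation.ReflTransGen.head ImmSub.ite1 h)
      have h2 := parseT F T2 (Relation.ReflTransGen.head ImmSub.ite2 h)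
      exact ⟨IsPTerm.ite hG h1.1 h2.1,
        fun hn => IsGTerm.ite hG (h1.2 (NegTerm.ite1 hn)) (h2.2 (NegTerm.ite2 hn))⟩
termination_by T => sizeOf T
decreasing_by
  all_goals simp_wf
  all_goals try omega
  all_goals (have := List.sizeOf_lt_of_mem hT; omega)
theorem parseF {Fn Pr : Type} (F : EufFormula Fn Pr) : (G : EufFormula Fn Pr) → FormulaInF G F →
    IsPFormula (fun g => ¬ ∃ args, NegTerm F (EufTerm.app g args)) G ∧
    (NegFormula F G → IsGFormula (fun g => ¬ ∃ args, NegTerm F (EufTerm.app g args)) G)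
  | .tt, _ => ⟨.g .tt, fun _ => .tt⟩
  | .ff, _ => ⟨.g .ff, fun _ => .ff⟩
  | .not G, h => by
      have hG := (parseF F G (Relation.ReflTransGen.head ImmSub.not h)).2 (NegFormula.ofNot h)
      exact ⟨.g (.not hG), fun _ => .not hG⟩
  | .and G1 G2, h => by
      have h1 := parseF F G1 (Relation.ReflTransGen.head ImmSub.andL h)
      have h2 := parseF F G2 (Relation.ReflTransGen.head ImmSub.andR h)
      exact ⟨.and h1.1 h2.1, fun hn => .and (h1.2 (.andL hn)) (h2.2 (.andR hn))⟩
  | .or G1 G2, h => by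
      have h1 := parseF F G1 (Relation.ReflTransGen.head ImmSub.orL h)
      have h2 := parseF F G2 (Relation.ReflTransGen.head ImmSub.orR h)
      exact ⟨.or h1.1 h2.1, fun hn => .or (h1.2 (.orL hn)) (h2.2 (.orR hn))⟩
  | .eq T1 T2, h => by
      have h1 := parseT F T1 (Relation.ReflTransGen.head ImmSub.eqL h)
      have h2 := parseT F T2 (Relation.ReflTransGen.head ImmSub.eqR h)
      exact ⟨.eq h1.1 h2.1, fun hn => .eq (h1.2 (.eqL hn)) (h2.2 (.eqR hn))⟩
  | .papp p args, h => by
      have ha : ∀ T ∈ args, IsPTerm (fun g => ¬ ∃ args, NegTerm F (EufTerm.app g args)) T :=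
        fun T hT => (parseT F T (Relation.ReflTransGen.head (ImmSub.pappArg hT) h)).1
      exact ⟨.g (.papp ha), fun _ => .papp ha⟩
termination_by G => sizeOf G
decreasing_by
  all_goals simp_wf
  all_goals try omega
  all_goals (have := List.sizeOf_lt_of_mem hT; omega)
end

/-- Any negation-normal EUF formula `F` can be parsed as a PEUF p-formula
in which the function symbols with an application in `Θ⁻` (the set `F_g`) are the g-function
symbols and all remaining function symbols (the set `F_p`) are the p-function symbols. -/
theorem peuf_extraction {Fn Pr : Type} (F : EufFormula Fn Pr) (hnnf : NNFF F) :
    IsPFormula (fun g => ¬ ∃ args, NegTerm F (EufTerm.app g args)) F := by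
  exact (parseF F F Relation.ReflTransGen.refl).1
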